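/- Let (p_k)_{k≥0} be nonnegative reals with ∑_{k≥0} p_k = 1, let φ(s) = ∑_{k≥0} p_k s^k for s ∈ [0,1], and let P ∈ [0,1). For each m ≥ 0 define p^{(1)}_m = (1/(1−P)) ∑_{k≥1} p_{m+k} · C(m+k, k) · P^k (1−P)^m, where C(m+k,k) is the binomial coefficient. Then for every s ∈ [0,1], ∑_{m≥0} p^{(1)}_m s^m = (1/(1−P)) [φ(P + s(1−P)) − φ(s(1−P))]. In particular, if φ(1−P) = P, then ∑_{m≥0} p^{(1)}_m = 1, so (p^{(1)}_m)_{m≥0} is again a probability distribution on ℕ. -/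

import Mathlib

theorem aux16 (p : ℕ → ℝ) (hp : ∀ k, 0 ≤ p k) (hs : Summable p) (x y : ℝ) (hx : 0 ≤ x)
    (hy : 0 ≤ y) (hxy : x + y ≤ 1) :
    ∑' m : ℕ, ∑' k : ℕ, p (m + (k + 1)) * ((m + (k + 1)).choose (k + 1) : ℝ) *
        x ^ (k + 1) * y ^ m = ∑' n, p n * (x + y) ^ n - ∑' n, p n * y ^ n := by
  have hpow : ∀ z : ℝ, 0 ≤ z → z ≤ 1 → Summable fun n => p n * z ^ n := fun z h0 h1 =>
    Summable.of_nonneg_of_le (fun n => mul_nonneg (hp n) (pow_nonneg h0 n))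
      (fun n => mul_le_of_le_one_right (hp n) (pow_le_one₀ h0 h1)) hs
  set F : ℕ × ℕ → ℝ := fun q => p (q.1 + q.2) * ((q.1 + q.2).choose q.2 : ℝ) * x ^ q.2 * y ^ q.1
    with hF
  have hF0 : ∀ q, 0 ≤ F q := fun q => by
    have := hp (q.1 + q.2)
    simp only [hF]; positivity
  have hin : ∀ n, ∑ q ∈ Finset.HasAntidiagonal.antidiagonal n, F q = p n * (x + y) ^ n := by
    intro n
    rw [add_comm x y, (Commute.all y x).add_pow', Finset.mul_sum]
    refine Finset.sum_congr rfl fun q hq => ?_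
    have hq' := Finset.HasAntidiagonal.mem_antidiagonal.mp hq
    simp only [hF, nsmul_eq_mul]
    rw [← hq', ← Nat.choose_symm_add]
    ring
  have hin' : ∀ n, ∑' q : Finset.HasAntidiagonal.antidiagonal n, F q = p n * (x + y) ^ n := by
    intro n
    rw [← hin n, Finset.tsum_subtype]
  have hsig : Summable fun q : (Σ n : ℕ, Finset.HasAntidiagonal.antidiagonal n) => F q.2 := by
    rw [summable_sigma_of_nonneg (fun q => hF0 _)]
    refine ⟨fun n => Summable.of_finite, ?_⟩
    simp only [hin']
    exact hpow _ (by linarith) hxy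
  have hFs : Summable F := by
    rw [← Finset.HasAntidiagonal.sigmaAntidiagonalEquivProd.summable_iff]
    exact hsig
  have h1 : ∑' q, F q = ∑' n, p n * (x + y) ^ n := by
    rw [← Finset.HasAntidiagonal.sigmaAntidiagonalEquivProd.tsum_eq F]
    have := hsig.tsum_sigma
    simp only [hin'] at this
    exact this
  have h2 := hFs.tsum_prod
  have h3 : ∀ m, ∑' k, F (m, k) = p m * y ^ m + ∑' k, F (m, k + 1) := by
    intro m
    rw [(hFs.prod_factor m).tsum_eq_zero_add]
    simp [hF]
  have hy' := hpow y hy (by linarith)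
  have h4 : Summable fun m => ∑' k, F (m, k + 1) := by
    have := hFs.prod.sub hy'
    refine this.congr fun m => ?_
    rw [h3]; ring
  rw [← h1, h2]
  simp only [h3]
  rw [hy'.tsum_add h4]
  simp [hF]

/-- with `φ(s) = ∑ₖ pₖ sᵏ` and `P ∈ [0,1)`, define
`p⁽¹⁾ₘ = (1/(1−P)) ∑_{k≥1} p_{m+k} C(m+k,k) Pᵏ (1−P)ᵐ`. Then for all
`s ∈ [0,1]`, `∑ₘ p⁽¹⁾ₘ sᵐ = (1/(1−P))[φ(P + s(1−P)) − φ(s(1−P))]`; in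
particular, if `φ(1−P) = P`, then `∑ₘ p⁽¹⁾ₘ = 1`, so `(p⁽¹⁾ₘ)` is again a
probability distribution on `ℕ`. -/
theorem stmt16 (p : ℕ → ℝ) (hp : ∀ k, 0 ≤ p k) (hsum : ∑' k, p k = 1)
    (P : ℝ) (hP0 : 0 ≤ P) (hP1 : P < 1)
    (φ : ℝ → ℝ) (hφ : ∀ s : ℝ, φ s = ∑' k : ℕ, p k * s ^ k)
    (p1 : ℕ → ℝ)
    (hp1 : ∀ m : ℕ, p1 m = (1 / (1 - P)) *
      ∑' k : ℕ, p (m + (k + 1)) * ((m + (k + 1)).choose (k + 1) : ℝ) *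
        P ^ (k + 1) * (1 - P) ^ m) :
    (∀ s ∈ Set.Icc (0 : ℝ) 1,
      ∑' m : ℕ, p1 m * s ^ m = (1 / (1 - P)) * (φ (P + s * (1 - P)) - φ (s * (1 - P)))) ∧
    (φ (1 - P) = P → ∑' m : ℕ, p1 m = 1) := by
  have hs : Summable p := by
    by_contra h
    rw [tsum_eq_zero_of_not_summable h] at hsum
    norm_num at hsum
  have hne : (1 - P) ≠ 0 := by linarith
  have main : ∀ s ∈ Set.Icc (0 : ℝ) 1,
      ∑' m : ℕ, p1 m * s ^ m = (1 / (1 - P)) * (φ (P + s * (1 - P)) - φ (s * (1 - P))) := by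
    rintro s ⟨h0, h1⟩
    rw [hφ, hφ, ← aux16 p hp hs P (s * (1 - P)) hP0 (mul_nonneg h0 (by linarith))
      (by nlinarith), ← tsum_mul_left]
    refine tsum_congr fun m => ?_
    rw [hp1, mul_assoc, ← tsum_mul_right]
    congr 1
    refine tsum_congr fun k => ?_
    rw [mul_pow]; ring
  refine ⟨main, fun h => ?_⟩
  have h1 := main 1 (by simp)
  have hφ1 : φ 1 = 1 := by rw [hφ]; simpa using hsum
  simp only [one_pow, mul_one, one_mul, add_sub_cancel, h, hφ1] at h1
  rw [h1]; field_simp
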